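/- arXiv:2312.16527 — 2 statements merged into one kernel-verified Lean document; each statement's English description precedes it below -/
import Mathlib

section
/- There exists an absolute constant $C>0$ such that the following holds. Let $\lambda\ge1$ and $N\ge M\ge1$. Let $a:\mathbb{Z}\to\mathbb{C}$ be finitely supported with $a(n)=0$ unless $|n|\le M\lambda$, and set $u(t,x)=\sum_{n\in\mathbb{Z}}a(n)\,e^{i(nx/\lambda-n^2t/\lambda^2)}$. Then $\Big(\int_0^{\lambda/N}\int_0^{2\pi\lambda}|u(t,x)|^6\,dx\,dt\Big)^{1/6}\le C\Big(\int_0^{2\pi\lambda}|u(0,x)|^2dx\Big)^{1/2}$. -/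
open MeasureTheory Real

lemma fibre_aux (H : ℕ) (hH : 1 ≤ H) (A α β : ℤ) (hα : 1 ≤ α) (hβ : 1 ≤ β) (hab : α + β = 4)
    (x z z' : ℤ) (hz : 0 ≤ z) (hzz : z ≤ z') (hx : |x| ≤ z)
    (h1 : A ≤ α * x ^ 2 + β * z ^ 2)
    (h2 : α * x ^ 2 + β * z' ^ 2 < A + H) :
    ((z' : ℝ) - z) * √(max (A : ℝ) H) ≤ 2 * H := by
  have hxz : x ^ 2 ≤ z ^ 2 := sq_le_sq' (by linarith [(abs_le.mp hx).1]) (abs_le.mp hx).2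
  have hH' : (1 : ℝ) ≤ H := by exact_mod_cast hH
  have hz' : (0:ℝ) ≤ z := by exact_mod_cast hz
  have hzz' : (z:ℝ) ≤ z' := by exact_mod_cast hzz
  rcases le_total (H : ℝ) A with h | h
  · rw [max_eq_left h]
    have hA : (A : ℤ) ≤ 4 * z ^ 2 := by nlinarith
    have hA' : (A : ℝ) ≤ (2 * z) ^ 2 := by
      have : (A : ℝ) ≤ 4 * z ^ 2 := by exact_mod_cast hA
      nlinarith
    have hR : √(A : ℝ) ≤ 2 * z := by
      rw [Real.sqrt_le_left (by positivity)]; exact hA'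
    have h3 : z' ^ 2 - z ^ 2 ≤ (H : ℤ) := by
      have : z ^ 2 ≤ z' ^ 2 := by nlinarith
      nlinarith
    have h3' : (z' : ℝ) ^ 2 - z ^ 2 ≤ H := by exact_mod_cast h3
    nlinarith
  · rw [max_eq_right h]
    have h' : A ≤ (H : ℤ) := by exact_mod_cast h
    have h3 : z' ^ 2 ≤ 2 * (H : ℤ) := by nlinarith [sq_nonneg x, sq_nonneg z']
    have h3' : (z' : ℝ) ^ 2 ≤ 2 * H := by exact_mod_cast h3
    have hs : √(H : ℝ) ^ 2 = H := Real.sq_sqrt (by positivity)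
    have : (z' * √(H:ℝ)) ≤ 2 * H := by
      apply le_of_sq_le_sq _ (by positivity)
      rw [mul_pow, hs]; nlinarith
    have h0 := Real.sqrt_nonneg (H : ℝ)
    nlinarith

lemma count_core {ι : Type*} (S : Finset ι) (X Z : ι → ℤ)
    (H : ℕ) (hH : 1 ≤ H) (A α β : ℤ) (hα : 1 ≤ α) (hβ : 1 ≤ β) (hab : α + β = 4)
    (hinj : ∀ i ∈ S, ∀ j ∈ S, X i = X j → Z i = Z j → i = j)
    (hXH : ∀ i ∈ S, |X i| ≤ H)
    (hXZ : ∀ i ∈ S, |X i| ≤ Z i)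
    (h1 : ∀ i ∈ S, A ≤ α * X i ^ 2 + β * Z i ^ 2)
    (h2 : ∀ i ∈ S, α * X i ^ 2 + β * Z i ^ 2 < A + H) :
    S.card ≤ 13 * H := by
  classical
  set R : ℝ := √(max (A : ℝ) H) with hR
  have hH' : (1 : ℝ) ≤ H := by exact_mod_cast hH
  have hR1 : 1 ≤ R := by
    rw [hR, Real.one_le_sqrt]; exact le_max_of_le_right hH'
  have hR2 : R ^ 2 = max (A : ℝ) H := Real.sq_sqrt (by positivity)
  have hAR : (A : ℝ) ≤ R ^ 2 := hR2 ▸ le_max_left _ _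
  have hHR : (H : ℝ) ≤ R ^ 2 := hR2 ▸ le_max_right _ _
  set D : ℕ := ⌊2 * H / R⌋₊ with hD
  have hfib : ∀ x ∈ S.image X, (S.filter (fun i => X i = x)).card ≤ D + 1 := by
    intro x hx
    obtain ⟨i0, hi0, rfl⟩ := Finset.mem_image.mp hx
    obtain ⟨m, hm, hmin⟩ := Finset.exists_min_image (S.filter (fun i => X i = X i0)) Z
      ⟨i0, by simp [hi0]⟩
    rw [Finset.mem_filter] at hm
    have : (S.filter (fun i => X i = X i0)).card ≤ (Finset.Icc (Z m) (Z m + D)).card := by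
      apply Finset.card_le_card_of_injOn Z
      · intro i hi
        have hi2 := hmin i hi
        simp only [Finset.coe_filter, Set.mem_ofPred_eq] at hi
        simp only [Finset.coe_Icc, Set.mem_Icc]
        refine ⟨hi2, ?_⟩
        have := fibre_aux H hH A α β hα hβ hab (X i) (Z m) (Z i)
          ((abs_nonneg _).trans (hXZ m hm.1)) hi2 (by rw [hi.2, ← hm.2]; exact hXZ m hm.1)
          (by rw [hi.2, ← hm.2]; exact h1 m hm.1) (h2 i hi.1)
        rw [← hR, ← le_div_iff₀ (by positivity)] at this
        have hnn : 0 ≤ Z i - Z m := by linarith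
        have h5 : (Z i - Z m).toNat ≤ D := by
          rw [hD]; apply Nat.le_floor
          have : (((Z i - Z m).toNat : ℤ) : ℝ) = (Z i : ℝ) - Z m := by
            rw [Int.toNat_of_nonneg hnn]; push_cast; rfl
          calc (((Z i - Z m).toNat : ℕ) : ℝ) = (Z i : ℝ) - Z m := by rw [← this]; norm_cast
            _ ≤ _ := by assumption
        omega
      · intro i hi j hj hij
        simp only [Finset.coe_filter, Set.mem_ofPred_eq] at hi hj
        exact hinj i hi.1 j hj.1 (hi.2.trans hj.2.symm) hij
    simpa [Int.card_Icc, add_sub_cancel_left, add_assoc] using this.trans_eq (by rw [Int.card_Icc]; omega : _ = D + 1)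
  have hcard : S.card ≤ (D + 1) * (S.image X).card :=
    Finset.card_le_mul_card_image S _ hfib
  have hc1 : (S.image X).card ≤ 2 * H + 1 := by
    have : (S.image X) ⊆ Finset.Icc (-(H:ℤ)) H := by
      intro x hx
      obtain ⟨i, hi, rfl⟩ := Finset.mem_image.mp hx
      rw [Finset.mem_Icc]; exact abs_le.mp (hXH i hi)
    refine (Finset.card_le_card this).trans ?_
    rw [Int.card_Icc]; omega
  have hc2 : ((S.image X).card : ℝ) ≤ 4 * R + 1 := by
    have : (S.image X) ⊆ Finset.Icc (-(⌊2 * R⌋₊:ℤ)) ⌊2 * R⌋₊ := by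
      intro x hx
      obtain ⟨i, hi, rfl⟩ := Finset.mem_image.mp hx
      rw [Finset.mem_Icc, ← abs_le]
      have e1 : X i ^ 2 ≤ A + H := by nlinarith [h2 i hi, sq_nonneg (X i), sq_nonneg (Z i)]
      have e2 : (X i : ℝ) ^ 2 ≤ A + H := by exact_mod_cast e1
      have e3 : |(X i : ℝ)| ≤ 2 * R := by
        apply abs_le_of_sq_le_sq _ (by positivity)
        nlinarith
      have : (X i).natAbs ≤ ⌊2 * R⌋₊ := by
        apply Nat.le_floor
        rw [Nat.cast_natAbs]; push_cast; exact e3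
      rw [Int.abs_eq_natAbs]; exact_mod_cast this
    have h6 : (S.image X).card ≤ 2 * ⌊2 * R⌋₊ + 1 := by
      refine (Finset.card_le_card this).trans ?_
      rw [Int.card_Icc]; omega
    have h7 : (⌊2 * R⌋₊ : ℝ) ≤ 2 * R := Nat.floor_le (by positivity)
    have h8 : ((S.image X).card : ℝ) ≤ 2 * ⌊2 * R⌋₊ + 1 := by exact_mod_cast h6
    linarith
  have hc1' : ((S.image X).card : ℝ) ≤ 2 * H + 1 := by exact_mod_cast hc1
  have hD' : (D : ℝ) ≤ 2 * H / R := Nat.floor_le (by positivity)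
  have hDR : (D : ℝ) * R ≤ 2 * H := (le_div_iff₀ (by positivity)).mp hD'
  have hDH : (D : ℝ) ≤ 2 * H := by nlinarith [(Nat.cast_nonneg D : (0:ℝ) ≤ D)]
  have hcard' : (S.card : ℝ) ≤ (D + 1) * (S.image X).card := by exact_mod_cast hcard
  have : (S.card : ℝ) ≤ 13 * H := by
    have : (D : ℝ) * (S.image X).card ≤ D * (4 * R + 1) := by gcongr
    nlinarith
  exact_mod_cast this

lemma count_all {ι : Type*} (S : Finset ι) (X Z : ι → ℤ)
    (H : ℕ) (hH : 1 ≤ H) (A : ℤ)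
    (hinj : ∀ i ∈ S, ∀ j ∈ S, X i = X j → Z i = Z j → i = j)
    (hXH : ∀ i ∈ S, |X i| ≤ H)
    (hZH : ∀ i ∈ S, |Z i| ≤ H)
    (h1 : ∀ i ∈ S, A ≤ X i ^ 2 + 3 * Z i ^ 2)
    (h2 : ∀ i ∈ S, X i ^ 2 + 3 * Z i ^ 2 < A + H) :
    S.card ≤ 52 * H := by
  classical
  have a1 := count_core (S.filter (fun i => |X i| ≤ Z i)) X Z H hH A 1 3 (by norm_num)
    (by norm_num) (by norm_num)
    (fun i hi j hj => hinj i (Finset.mem_filter.mp hi).1 j (Finset.mem_filter.mp hj).1)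
    (fun i hi => hXH i (Finset.mem_filter.mp hi).1) (fun i hi => (Finset.mem_filter.mp hi).2)
    (fun i hi => by have := h1 i (Finset.mem_filter.mp hi).1; linarith)
    (fun i hi => by have := h2 i (Finset.mem_filter.mp hi).1; linarith)
  have a2 := count_core (S.filter (fun i => |X i| ≤ -Z i)) X (fun i => - Z i) H hH A 1 3
    (by norm_num) (by norm_num) (by norm_num)
    (fun i hi j hj hx hz => hinj i (Finset.mem_filter.mp hi).1 j (Finset.mem_filter.mp hj).1 hx
      (neg_injective hz))
    (fun i hi => hXH i (Finset.mem_filter.mp hi).1) (fun i hi => (Finset.mem_filter.mp hi).2)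
    (fun i hi => by have := h1 i (Finset.mem_filter.mp hi).1; simp only [neg_sq]; linarith)
    (fun i hi => by have := h2 i (Finset.mem_filter.mp hi).1; simp only [neg_sq]; linarith)
  have a3 := count_core (S.filter (fun i => |Z i| ≤ X i)) Z X H hH A 3 1 (by norm_num)
    (by norm_num) (by norm_num)
    (fun i hi j hj hx hz => hinj i (Finset.mem_filter.mp hi).1 j (Finset.mem_filter.mp hj).1 hz hx)
    (fun i hi => hZH i (Finset.mem_filter.mp hi).1) (fun i hi => (Finset.mem_filter.mp hi).2)
    (fun i hi => by have := h1 i (Finset.mem_filter.mp hi).1; linarith)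
    (fun i hi => by have := h2 i (Finset.mem_filter.mp hi).1; linarith)
  have a4 := count_core (S.filter (fun i => |Z i| ≤ -X i)) Z (fun i => - X i) H hH A 3 1
    (by norm_num) (by norm_num) (by norm_num)
    (fun i hi j hj hx hz => hinj i (Finset.mem_filter.mp hi).1 j (Finset.mem_filter.mp hj).1
      (neg_injective hz) hx)
    (fun i hi => hZH i (Finset.mem_filter.mp hi).1) (fun i hi => (Finset.mem_filter.mp hi).2)
    (fun i hi => by have := h1 i (Finset.mem_filter.mp hi).1; simp only [neg_sq]; linarith)
    (fun i hi => by have := h2 i (Finset.mem_filter.mp hi).1; simp only [neg_sq]; linarith)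
  have hsub : S ⊆ (S.filter (fun i => |X i| ≤ Z i) ∪ S.filter (fun i => |X i| ≤ -Z i)) ∪
      (S.filter (fun i => |Z i| ≤ X i) ∪ S.filter (fun i => |Z i| ≤ -X i)) := by
    intro i hi
    simp only [Finset.mem_union, Finset.mem_filter, hi, true_and]
    simp only [Int.abs_eq_natAbs]
    omega
  have := Finset.card_le_card hsub
  have b1 := Finset.card_union_le (S.filter (fun i => |X i| ≤ Z i) ∪ S.filter (fun i => |X i| ≤ -Z i))
      (S.filter (fun i => |Z i| ≤ X i) ∪ S.filter (fun i => |Z i| ≤ -X i))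
  have b2 := Finset.card_union_le (S.filter (fun i => |X i| ≤ Z i)) (S.filter (fun i => |X i| ≤ -Z i))
  have b3 := Finset.card_union_le (S.filter (fun i => |Z i| ≤ X i)) (S.filter (fun i => |Z i| ≤ -X i))
  omega

lemma int_exp_re (z : ℂ) (m : ℤ) :
    ∫ y in (0:ℝ)..(2 * π), (z * Complex.exp (Complex.I * ((m : ℂ) * y))).re
      = if m = 0 then 2 * π * z.re else 0 := by
  have hint : ∫ y in (0:ℝ)..(2 * π), (z * Complex.exp (Complex.I * ((m : ℂ) * y)))
      = if m = 0 then 2 * π * z else 0 := by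
    split_ifs with h
    · subst h; simp
    · rw [intervalIntegral.integral_const_mul]
      have hm : Complex.I * (m : ℂ) ≠ 0 := mul_ne_zero Complex.I_ne_zero (by exact_mod_cast h)
      have := integral_exp_mul_complex (a := 0) (b := 2 * π) hm
      simp only [mul_assoc] at this
      rw [this]
      have e : Complex.exp (Complex.I * ((m : ℂ) * ((2 * π : ℝ) : ℂ))) = 1 := by
        rw [Complex.exp_eq_one_iff]; exact ⟨m, by push_cast; ring⟩
      rw [e]; simp
  have hii : IntervalIntegrable (fun y : ℝ => z * Complex.exp (Complex.I * ((m : ℂ) * y)))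
      volume 0 (2 * π) := by
    apply Continuous.intervalIntegrable; fun_prop
  have := intervalIntegral.intervalIntegral_re hii
  simp only [RCLike.re_eq_complex_re] at this
  rw [this, hint]
  split_ifs <;> simp

lemma norm_sum_sq {ι : Type*} (S : Finset ι) (w : ι → ℂ) :
    ‖∑ i ∈ S, w i‖ ^ 2 = ∑ i ∈ S, ∑ j ∈ S, (w i * (starRingEnd ℂ) (w j)).re := by
  have : ((‖∑ i ∈ S, w i‖ ^ 2 : ℝ) : ℂ) = ∑ i ∈ S, ∑ j ∈ S, (w i * (starRingEnd ℂ) (w j)) := by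
    push_cast
    rw [← Complex.mul_conj', map_sum, Finset.sum_mul_sum]
  have h := congrArg Complex.re this
  rw [Complex.ofReal_re] at h
  rw [h]; simp only [Complex.re_sum]

lemma conj_exp_I (r : ℝ) : (starRingEnd ℂ) (Complex.exp (Complex.I * r))
    = Complex.exp (-(Complex.I * r)) := by
  rw [← Complex.exp_conj]; simp

lemma parseval1 {ι : Type*} (S : Finset ι) (c : ι → ℂ) (p : ι → ℤ) :
    ∫ y in (0:ℝ)..(2 * π), ‖∑ i ∈ S, c i * Complex.exp (Complex.I * ((p i : ℂ) * y))‖ ^ 2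
      = ∑ i ∈ S, ∑ j ∈ S, if p i = p j then 2 * π * (c i * (starRingEnd ℂ) (c j)).re else 0 := by
  have key : ∀ (y : ℝ) (i j : ι), (c i * Complex.exp (Complex.I * ((p i : ℂ) * y))) *
      (starRingEnd ℂ) (c j * Complex.exp (Complex.I * ((p j : ℂ) * y)))
      = (c i * (starRingEnd ℂ) (c j)) * Complex.exp (Complex.I * (((p i - p j : ℤ) : ℂ) * y)) := by
    intro y i j
    have e : (starRingEnd ℂ) (Complex.exp (Complex.I * ((p j : ℂ) * y)))
        = Complex.exp (-(Complex.I * ((p j : ℂ) * y))) := by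
      have := conj_exp_I (p j * y); push_cast at this; exact this
    rw [map_mul, e]
    have : Complex.exp (Complex.I * (((p i - p j : ℤ) : ℂ) * y))
        = Complex.exp (Complex.I * ((p i : ℂ) * y)) * Complex.exp (-(Complex.I * ((p j : ℂ) * y))) := by
      rw [← Complex.exp_add]; congr 1; push_cast; ring
    rw [this]; ring
  simp only [norm_sum_sq, key]
  have cont : ∀ i j : ι, Continuous (fun y : ℝ => ((c i * (starRingEnd ℂ) (c j)) *
      Complex.exp (Complex.I * (((p i - p j : ℤ) : ℂ) * y))).re) := by
    intro i j; fun_prop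
  rw [intervalIntegral.integral_finsetSum]
  · refine Finset.sum_congr rfl fun i _ => ?_
    rw [intervalIntegral.integral_finsetSum]
    · refine Finset.sum_congr rfl fun j _ => ?_
      rw [int_exp_re]; simp only [sub_eq_zero]
    · intro j _; exact (cont i j).intervalIntegrable _ _
  · intro i _
    exact (continuous_finsetSum _ fun j _ => cont i j).intervalIntegrable _ _

lemma schur {ι : Type*} (S : Finset ι) (c : ι → ℂ) (P : ℝ) (r : ι → ι → Prop) [DecidableRel r]
    (hsymm : ∀ i j, r i j → r j i)
    (hP : ∀ i ∈ S, ((S.filter (fun j => r i j)).card : ℝ) ≤ P) :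
    ∑ i ∈ S, ∑ j ∈ S, (if r i j then (c i * (starRingEnd ℂ) (c j)).re else 0)
      ≤ P * ∑ i ∈ S, ‖c i‖ ^ 2 := by
  have h1 : ∀ i j, (if r i j then (c i * (starRingEnd ℂ) (c j)).re else 0) ≤
      (if r i j then ‖c i‖ ^ 2 / 2 else 0) + (if r j i then ‖c j‖ ^ 2 / 2 else 0) := by
    intro i j
    by_cases h : r i j
    · rw [if_pos h, if_pos h, if_pos (hsymm _ _ h)]
      have := Complex.re_le_norm (c i * (starRingEnd ℂ) (c j))
      rw [norm_mul, RCLike.norm_conj] at this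
      nlinarith [sq_nonneg (‖c i‖ - ‖c j‖)]
    · rw [if_neg h, if_neg h]; split_ifs <;> positivity
  have h2 : ∑ i ∈ S, ∑ j ∈ S, (if r i j then ‖c i‖ ^ 2 / 2 else 0) ≤ P * ∑ i ∈ S, ‖c i‖ ^ 2 / 2 := by
    rw [Finset.mul_sum]
    refine Finset.sum_le_sum fun i hi => ?_
    rw [← Finset.sum_filter, Finset.sum_const, nsmul_eq_mul]
    exact mul_le_mul_of_nonneg_right (hP i hi) (by positivity)
  calc _ ≤ ∑ i ∈ S, ∑ j ∈ S, ((if r i j then ‖c i‖ ^ 2 / 2 else 0)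
        + (if r j i then ‖c j‖ ^ 2 / 2 else 0)) :=
        Finset.sum_le_sum fun i _ => Finset.sum_le_sum fun j _ => h1 i j
    _ = 2 * ∑ i ∈ S, ∑ j ∈ S, (if r i j then ‖c i‖ ^ 2 / 2 else 0) := by
        simp only [Finset.sum_add_distrib]
        rw [Finset.sum_comm (f := fun i j => if r j i then ‖c j‖ ^ 2 / 2 else 0)]; ring
    _ ≤ 2 * (P * ∑ i ∈ S, ‖c i‖ ^ 2 / 2) := by linarith
    _ = _ := by rw [← Finset.sum_div]; ring

lemma parseval2 {ι : Type*} (S : Finset ι) (c : ι → ℂ) (p q : ι → ℤ) (P : ℝ)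
    (hP : ∀ i ∈ S, ((S.filter (fun j => p i = p j ∧ q i = q j)).card : ℝ) ≤ P) :
    ∫ s in (0:ℝ)..(2 * π), ∫ y in (0:ℝ)..(2 * π),
      ‖∑ i ∈ S, c i * Complex.exp (Complex.I * ((q i : ℂ) * s))
         * Complex.exp (Complex.I * ((p i : ℂ) * y))‖ ^ 2
      ≤ 4 * π ^ 2 * (P * ∑ i ∈ S, ‖c i‖ ^ 2) := by
  have key : ∀ (y : ℝ) (i j : ι), (c i * Complex.exp (Complex.I * ((q i : ℂ) * y))) *
      (starRingEnd ℂ) (c j * Complex.exp (Complex.I * ((q j : ℂ) * y)))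
      = (c i * (starRingEnd ℂ) (c j)) * Complex.exp (Complex.I * (((q i - q j : ℤ) : ℂ) * y)) := by
    intro y i j
    have e : (starRingEnd ℂ) (Complex.exp (Complex.I * ((q j : ℂ) * y)))
        = Complex.exp (-(Complex.I * ((q j : ℂ) * y))) := by
      have := conj_exp_I (q j * y); push_cast at this; exact this
    rw [map_mul, e]
    have : Complex.exp (Complex.I * (((q i - q j : ℤ) : ℂ) * y))
        = Complex.exp (Complex.I * ((q i : ℂ) * y)) * Complex.exp (-(Complex.I * ((q j : ℂ) * y))) := by
      rw [← Complex.exp_add]; congr 1; push_cast; ring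
    rw [this]; ring
  simp only [parseval1, key]
  have cont : ∀ i j : ι, Continuous (fun y : ℝ => if p i = p j then
      2 * π * ((c i * (starRingEnd ℂ) (c j)) *
      Complex.exp (Complex.I * (((q i - q j : ℤ) : ℂ) * y))).re else 0) := by
    intro i j; split_ifs <;> fun_prop
  refine le_trans (le_of_eq ?_) (mul_le_mul_of_nonneg_left
    (schur S c P (fun i j => p i = p j ∧ q i = q j) (fun i j h => ⟨h.1.symm, h.2.symm⟩) hP)
    (by positivity))
  rw [intervalIntegral.integral_finsetSum, Finset.mul_sum]
  · refine Finset.sum_congr rfl fun i _ => ?_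
    rw [intervalIntegral.integral_finsetSum, Finset.mul_sum]
    · refine Finset.sum_congr rfl fun j _ => ?_
      by_cases h : p i = p j
      · simp only [h, if_true, true_and]
        rw [intervalIntegral.integral_const_mul, int_exp_re]; simp only [sub_eq_zero]
        split_ifs <;> ring
      · simp [h]
    · intro j _; exact (cont i j).intervalIntegrable _ _
  · intro i _
    exact (continuous_finsetSum _ fun j _ => cont i j).intervalIntegrable _ _

lemma fibre_count (L : ℕ) (hL : 1 ≤ L) (s : Finset ℤ) (hs : ∀ n ∈ s, |n| ≤ (L : ℤ)) (k m : ℤ) :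
    ((Finset.range L ×ˢ s ×ˢ s ×ˢ s).filter (fun j : ℕ × ℤ × ℤ × ℤ =>
      k = j.2.1 + j.2.2.1 + j.2.2.2 ∧
      m = (j.1 : ℤ) - (j.2.1 ^ 2 + j.2.2.1 ^ 2 + j.2.2.2 ^ 2))).card ≤ 312 * L := by
  have := count_all ((Finset.range L ×ˢ s ×ˢ s ×ˢ s).filter (fun j : ℕ × ℤ × ℤ × ℤ =>
      k = j.2.1 + j.2.2.1 + j.2.2.2 ∧
      m = (j.1 : ℤ) - (j.2.1 ^ 2 + j.2.2.1 ^ 2 + j.2.2.2 ^ 2)))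
      (fun j => 3 * j.2.1 - k) (fun j => j.2.2.1 - j.2.2.2) (6 * L) (by omega)
      (-6 * m - 2 * k ^ 2) ?_ ?_ ?_ ?_ ?_
  · omega
  · rintro ⟨j, n1, n2, n3⟩ h ⟨j', n1', n2', n3'⟩ h' hx hz
    simp only [Finset.mem_filter, Finset.mem_product] at h h' hx hz
    obtain ⟨-, h1, h2⟩ := h
    obtain ⟨-, h1', h2'⟩ := h'
    have e1 : n1 = n1' := by omega
    have e2 : n2 = n2' := by omega
    have e3 : n3 = n3' := by omega
    subst e1 e2 e3
    have : j = j' := by omega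
    subst this; rfl
  · rintro ⟨j, n1, n2, n3⟩ h
    simp only [Finset.mem_filter, Finset.mem_product] at h ⊢
    obtain ⟨⟨-, a1, a2, a3⟩, h1, h2⟩ := h
    have b1 := abs_le.mp (hs _ a1); have b2 := abs_le.mp (hs _ a2); have b3 := abs_le.mp (hs _ a3)
    rw [abs_le]; push_cast; constructor <;> omega
  · rintro ⟨j, n1, n2, n3⟩ h
    simp only [Finset.mem_filter, Finset.mem_product] at h ⊢
    obtain ⟨⟨-, a1, a2, a3⟩, h1, h2⟩ := h
    have b1 := abs_le.mp (hs _ a1); have b2 := abs_le.mp (hs _ a2); have b3 := abs_le.mp (hs _ a3)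
    rw [abs_le]; push_cast; constructor <;> omega
  · rintro ⟨j, n1, n2, n3⟩ h
    simp only [Finset.mem_filter, Finset.mem_product] at h ⊢
    obtain ⟨-, h1, h2⟩ := h
    subst h1 h2
    have : (0:ℤ) ≤ j := by positivity
    nlinarith
  · rintro ⟨j, n1, n2, n3⟩ h
    simp only [Finset.mem_filter, Finset.mem_product, Finset.mem_range] at h ⊢
    obtain ⟨⟨h0, -⟩, h1, h2⟩ := h
    subst h1 h2
    have : (j:ℤ) < L := by exact_mod_cast h0
    push_cast
    nlinarith

lemma dirichlet_lower (L : ℕ) (s : ℝ) (hs : 0 ≤ s) (hsL : s * L ≤ 1) :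
    (L : ℝ) ^ 2 ≤ 4 * ‖∑ j ∈ Finset.range L, Complex.exp (Complex.I * ((j : ℂ) * s))‖ ^ 2 := by
  have h1 : (L : ℝ) / 2 ≤ (∑ j ∈ Finset.range L, Complex.exp (Complex.I * ((j : ℂ) * s))).re := by
    rw [Complex.re_sum]
    have : ∀ j ∈ Finset.range L, (1/2 : ℝ) ≤ (Complex.exp (Complex.I * ((j : ℂ) * s))).re := by
      intro j hj
      have hj' : (j : ℝ) ≤ L := by exact_mod_cast (Finset.mem_range.mp hj).le
      have e : (Complex.exp (Complex.I * ((j : ℂ) * s))).re = Real.cos (j * s) := by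
        rw [mul_comm]
        have := Complex.exp_ofReal_mul_I_re (j * s)
        push_cast at this; exact this
      rw [e]
      have h2 := Real.one_sub_sq_div_two_le_cos (x := j * s)
      have h3 : (j : ℝ) * s ≤ 1 := by nlinarith
      have h4 : 0 ≤ (j : ℝ) * s := by positivity
      nlinarith
    calc (L : ℝ) / 2 = ∑ j ∈ Finset.range L, (1/2 : ℝ) := by simp; ring
      _ ≤ _ := Finset.sum_le_sum this
  have h2 := h1.trans (Complex.re_le_norm _)
  have : (0:ℝ) ≤ L := by positivity
  nlinarith

lemma expand_prod (L : ℕ) (a : ℤ → ℂ) (S : Finset ℤ) (s y : ℝ) :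
    (∑ j ∈ Finset.range L, Complex.exp (Complex.I * ((j : ℂ) * s))) *
      (∑ n ∈ S, a n * Complex.exp (Complex.I * ((n : ℂ) * y - (n : ℂ) ^ 2 * s))) ^ 3
    = ∑ i ∈ Finset.range L ×ˢ S ×ˢ S ×ˢ S, (a i.2.1 * a i.2.2.1 * a i.2.2.2) *
        Complex.exp (Complex.I *
          ((((i.1 : ℤ) - (i.2.1 ^ 2 + i.2.2.1 ^ 2 + i.2.2.2 ^ 2) : ℤ) : ℂ) * s)) *
        Complex.exp (Complex.I * (((i.2.1 + i.2.2.1 + i.2.2.2 : ℤ) : ℂ) * y)) := by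
  have : ∀ z : ℂ, z ^ 3 = z * (z * z) := fun z => by ring
  rw [this, Finset.sum_mul_sum, ← Finset.sum_product', Finset.sum_mul_sum, ← Finset.sum_product',
    Finset.sum_mul_sum, ← Finset.sum_product']
  refine Finset.sum_congr rfl fun i _ => ?_
  have e : Complex.exp (Complex.I *
          ((((i.1 : ℤ) - (i.2.1 ^ 2 + i.2.2.1 ^ 2 + i.2.2.2 ^ 2) : ℤ) : ℂ) * s)) *
        Complex.exp (Complex.I * (((i.2.1 + i.2.2.1 + i.2.2.2 : ℤ) : ℂ) * y))
      = Complex.exp (Complex.I * ((i.1 : ℂ) * s)) *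
        (Complex.exp (Complex.I * ((i.2.1 : ℂ) * y - (i.2.1 : ℂ) ^ 2 * s)) *
        (Complex.exp (Complex.I * ((i.2.2.1 : ℂ) * y - (i.2.2.1 : ℂ) ^ 2 * s)) *
        Complex.exp (Complex.I * ((i.2.2.2 : ℂ) * y - (i.2.2.2 : ℂ) ^ 2 * s)))) := by
    simp only [← Complex.exp_add]; congr 1; push_cast; ring
  rw [mul_assoc (a i.2.1 * a i.2.2.1 * a i.2.2.2), e]; ring

lemma strichartz_core (L : ℕ) (hL : 1 ≤ L) (a : ℤ → ℂ) (S : Finset ℤ)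
    (hS : ∀ n ∈ S, |n| ≤ (L : ℤ)) (T : ℝ) (hT : 0 ≤ T) (hTL : T * L ≤ 1) :
    ∫ s in (0:ℝ)..T, ∫ y in (0:ℝ)..(2 * π),
      ‖∑ n ∈ S, a n * Complex.exp (Complex.I * ((n : ℂ) * y - (n : ℂ) ^ 2 * s))‖ ^ 6
      ≤ 4992 * π ^ 2 * (∑ n ∈ S, ‖a n‖ ^ 2) ^ 3 := by
  have hL' : (1:ℝ) ≤ L := by exact_mod_cast hL
  have hT1 : T ≤ 1 := by nlinarith
  have hpi := Real.pi_gt_three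
  set v : ℝ → ℝ → ℂ := fun s y =>
    ∑ n ∈ S, a n * Complex.exp (Complex.I * ((n : ℂ) * y - (n : ℂ) ^ 2 * s)) with hv
  set D : ℝ → ℂ := fun s => ∑ j ∈ Finset.range L, Complex.exp (Complex.I * ((j : ℂ) * s)) with hD
  have hDc : Continuous D := by rw [hD]; fun_prop
  have hvc : Continuous (Function.uncurry v) := by
    rw [hv]; simp only [Function.uncurry_def]; fun_prop
  set g : ℝ → ℝ := fun s => ∫ y in (0:ℝ)..(2 * π), ‖v s y‖ ^ 6 with hg
  have hgc : Continuous g := by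
    apply intervalIntegral.continuous_parametric_intervalIntegral_of_continuous'
    exact (hvc.norm.pow 6)
  have hg0 : ∀ s, 0 ≤ g s := fun s =>
    intervalIntegral.integral_nonneg (by positivity) (fun y _ => by positivity)
  have step1 : ∫ s in (0:ℝ)..T, g s ≤ ∫ s in (0:ℝ)..T, 4 / (L:ℝ) ^ 2 * (‖D s‖ ^ 2 * g s) := by
    apply intervalIntegral.integral_mono_on hT (hgc.intervalIntegrable _ _)
    · apply Continuous.intervalIntegrable; fun_prop
    · intro s hs
      have h := dirichlet_lower L s hs.1 (by nlinarith [hs.2])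
      have h' : 1 ≤ 4 / (L:ℝ) ^ 2 * ‖D s‖ ^ 2 := by
        rw [div_mul_eq_mul_div, le_div_iff₀ (by positivity)]; linarith
      nlinarith [hg0 s]
  have step2 : ∫ s in (0:ℝ)..T, 4 / (L:ℝ) ^ 2 * (‖D s‖ ^ 2 * g s)
      ≤ ∫ s in (0:ℝ)..(2 * π), 4 / (L:ℝ) ^ 2 * (‖D s‖ ^ 2 * g s) := by
    apply intervalIntegral.integral_mono_interval le_rfl hT (by linarith)
    · filter_upwards with s
      have := hg0 s
      simp only [Pi.zero_apply]; positivity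
    · apply Continuous.intervalIntegrable; fun_prop
  have step3 : ∫ s in (0:ℝ)..(2 * π), (‖D s‖ ^ 2 * g s)
      ≤ 4 * π ^ 2 * ((312 * L) * (L * (∑ n ∈ S, ‖a n‖ ^ 2) ^ 3)) := by
    have := parseval2 (Finset.range L ×ˢ S ×ˢ S ×ˢ S)
      (fun i => a i.2.1 * a i.2.2.1 * a i.2.2.2) (fun i => i.2.1 + i.2.2.1 + i.2.2.2)
      (fun i => (i.1 : ℤ) - (i.2.1 ^ 2 + i.2.2.1 ^ 2 + i.2.2.2 ^ 2)) (312 * L)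
      (fun i _ => by exact_mod_cast fibre_count L hL S hS _ _)
    simp only [← expand_prod] at this
    have hsum : ∑ i ∈ Finset.range L ×ˢ S ×ˢ S ×ˢ S, ‖a i.2.1 * a i.2.2.1 * a i.2.2.2‖ ^ 2
        = L * (∑ n ∈ S, ‖a n‖ ^ 2) ^ 3 := by
      have h3 : ∀ z : ℝ, z ^ 3 = z * (z * z) := fun z => by ring
      rw [h3, Finset.sum_mul_sum, ← Finset.sum_product', Finset.sum_mul_sum,
        ← Finset.sum_product', Finset.sum_product]
      simp only [Finset.sum_const, Finset.card_range, nsmul_eq_mul]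
      congr 1
      refine Finset.sum_congr rfl fun i _ => ?_
      simp only [norm_mul]; ring
    rw [hsum] at this
    refine le_trans (le_of_eq ?_) this
    refine intervalIntegral.integral_congr fun s _ => ?_
    simp only [hg]
    rw [← intervalIntegral.integral_const_mul]
    refine intervalIntegral.integral_congr fun y _ => ?_
    simp only [norm_mul, norm_pow, hD, hv]
    ring
  have step2' := step1.trans step2
  rw [intervalIntegral.integral_const_mul (a := 0) (b := 2 * π)] at step2'
  refine step2'.trans ((mul_le_mul_of_nonneg_left step3 (by positivity)).trans
    (le_of_eq ?_))
  field_simp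
  ring

/-- Scale-invariant `L⁶` Strichartz estimate without derivative loss on the rescaled torus
`𝕋_λ = ℝ/(2πλℤ)` for free Schrödinger waves with frequencies at most `M ≤ N`, on the
time interval `[0, λ/N]`. -/
theorem linear_L6_strichartz_long_time :
    ∃ C : ℝ, 0 < C ∧
      ∀ (lam M N : ℝ), 1 ≤ lam → 1 ≤ M → M ≤ N →
      ∀ (a : ℤ →₀ ℂ),
        (∀ n : ℤ, ¬ |(n : ℝ)| ≤ M * lam → a n = 0) →
      ∀ (u : ℝ → ℝ → ℂ),
        (∀ t x : ℝ, u t x = ∑ n ∈ a.support, a n *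
          Complex.exp (Complex.I *
            ((n : ℂ) * (x : ℂ) / (lam : ℂ) - (n : ℂ) ^ 2 * (t : ℂ) / (lam : ℂ) ^ 2))) →
        (∫ t in (0:ℝ)..(lam / N), ∫ x in (0:ℝ)..(2 * π * lam),
            ‖u t x‖ ^ 6) ^ ((1:ℝ)/6) ≤
          C * (∫ x in (0:ℝ)..(2 * π * lam), ‖u 0 x‖ ^ 2) ^ ((1:ℝ)/2) := by
  refine ⟨(4992 * π ^ 2) ^ ((1:ℝ)/6), by positivity, ?_⟩
  intro lam M N hlam hM hMN a ha u hu
  have hlam0 : 0 < lam := by linarith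
  have hN0 : 0 < N := by linarith
  have hK : 1 ≤ M * lam := by nlinarith
  set L : ℕ := ⌊M * lam⌋₊ with hLdef
  have hL : 1 ≤ L := Nat.le_floor (by simpa using hK)
  have hLK : (L : ℝ) ≤ M * lam := Nat.floor_le (by positivity)
  have hS : ∀ n ∈ a.support, |n| ≤ (L : ℤ) := by
    intro n hn
    have h1 : |(n : ℝ)| ≤ M * lam := by
      by_contra h
      exact (Finsupp.mem_support_iff.mp hn) (ha n h)
    have : n.natAbs ≤ L := by
      apply Nat.le_floor
      rw [Nat.cast_natAbs]; push_cast; exact h1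
    rw [Int.abs_eq_natAbs]; exact_mod_cast this
  set v : ℝ → ℝ → ℂ := fun s y =>
    ∑ n ∈ a.support, a n * Complex.exp (Complex.I * ((n : ℂ) * y - (n : ℂ) ^ 2 * s)) with hv
  have huv : ∀ t x, u t x = v (t / lam ^ 2) (x / lam) := by
    intro t x
    rw [hu, hv]
    refine Finset.sum_congr rfl fun n _ => ?_
    push_cast
    simp only [mul_div_assoc]
  set E : ℝ := ∑ n ∈ a.support, ‖a n‖ ^ 2 with hE
  have hE0 : 0 ≤ E := Finset.sum_nonneg fun _ _ => by positivity
  have hlhs : ∫ t in (0:ℝ)..(lam / N), ∫ x in (0:ℝ)..(2 * π * lam), ‖u t x‖ ^ 6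
      = lam ^ 3 * ∫ s in (0:ℝ)..(1 / (lam * N)), ∫ y in (0:ℝ)..(2 * π), ‖v s y‖ ^ 6 := by
    have h1 : ∀ t, ∫ x in (0:ℝ)..(2 * π * lam), ‖u t x‖ ^ 6
        = lam * ∫ y in (0:ℝ)..(2 * π), ‖v (t / lam ^ 2) y‖ ^ 6 := by
      intro t
      simp only [huv]
      rw [intervalIntegral.integral_comp_div (fun y => ‖v (t / lam ^ 2) y‖ ^ 6) hlam0.ne']
      rw [zero_div, mul_div_cancel_right₀ _ hlam0.ne', smul_eq_mul]
    simp only [h1]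
    rw [intervalIntegral.integral_const_mul,
      intervalIntegral.integral_comp_div (fun s => ∫ y in (0:ℝ)..(2 * π), ‖v s y‖ ^ 6)
        (pow_ne_zero 2 hlam0.ne')]
    have : lam / N / lam ^ 2 = 1 / (lam * N) := by field_simp
    rw [this, zero_div, smul_eq_mul]; ring
  have hrhs : ∫ x in (0:ℝ)..(2 * π * lam), ‖u 0 x‖ ^ 2 = 2 * π * lam * E := by
    simp only [huv]
    rw [intervalIntegral.integral_comp_div (fun y => ‖v (0 / lam ^ 2) y‖ ^ 2) hlam0.ne']
    rw [zero_div, mul_div_cancel_right₀ _ hlam0.ne', smul_eq_mul, hv]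
    have := parseval1 a.support a (fun n => n)
    simp only [zero_div, Complex.ofReal_zero, mul_zero, sub_zero]
    rw [this]
    simp only [Finset.sum_ite_eq]
    rw [hE, Finset.mul_sum, Finset.mul_sum]
    refine Finset.sum_congr rfl fun n hn => ?_
    rw [if_pos hn, Complex.mul_conj', ← Complex.ofReal_pow, Complex.ofReal_re]; ring
  have hcore := strichartz_core L hL a a.support hS (1 / (lam * N)) (by positivity) (by
    rw [div_mul_eq_mul_div, div_le_one (by positivity)]; nlinarith)
  have hpi := Real.pi_gt_three
  have hle : lam ^ 3 * (∫ s in (0:ℝ)..(1 / (lam * N)), ∫ y in (0:ℝ)..(2 * π), ‖v s y‖ ^ 6)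
      ≤ (4992 * π ^ 2) * (2 * π * lam * E) ^ 3 := by
    calc _ ≤ lam ^ 3 * (4992 * π ^ 2 * E ^ 3) := by gcongr
      _ = (4992 * π ^ 2) * (1 * lam * E) ^ 3 := by ring
      _ ≤ _ := by gcongr; linarith
  rw [hlhs, hrhs]
  have hnn : 0 ≤ lam ^ 3 *
      (∫ s in (0:ℝ)..(1 / (lam * N)), ∫ y in (0:ℝ)..(2 * π), ‖v s y‖ ^ 6) := by
    refine mul_nonneg (by positivity) (intervalIntegral.integral_nonneg (by positivity)
      fun s _ => intervalIntegral.integral_nonneg (by positivity) fun y _ => by positivity)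
  refine (Real.rpow_le_rpow hnn hle (by norm_num)).trans (le_of_eq ?_)
  rw [Real.mul_rpow (by positivity) (by positivity), ← Real.rpow_natCast (2 * π * lam * E) 3,
    ← Real.rpow_mul (by positivity)]
  norm_num
end

section
/- There exists an absolute constant $C>0$ such that the following holds. Let $\gamma\in(1/2,1]$, $\lambda\ge1$ and $N\ge1$ with $\lambda\ge N$. For $n=(n_1,n_2)\in\mathbb{Z}^2$ set $\kappa(n)=(n_1/\lambda,\;n_2/(\gamma\lambda))\in\mathbb{R}^2$. Let $a:\mathbb{Z}^2\to\mathbb{C}$ be finitely supported with $a(n)=0$ unless $|\kappa(n)|\le N$, and set $u(t,x)=\sum_{n\in\mathbb{Z}^2}a(n)\,e^{i(\kappa(n)\cdot x-|\kappa(n)|^2t)}$ for $x\in\mathbb{R}^2$. Then $\Big(\int_0^{1}\int_0^{2\pi\gamma\lambda}\int_0^{2\pi\lambda}|u(t,x)|^4\,dx_1\,dx_2\,dt\Big)^{1/4}\le C\Big(\int_0^{2\pi\gamma\lambda}\int_0^{2\pi\lambda}|u(0,x)|^2\,dx_1\,dx_2\Big)^{1/2}$, with $C$ independent of $\gamma$,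 $\lambda$ and $N$. -/
open MeasureTheory Real

theorem exp_int (L : ℝ) (hL : 0 < L) (k : ℤ) :
   ∫ x in (0:ℝ)..(2*π*L), Complex.exp (Complex.I * (k * x / L)) = if k = 0 then (2*π*L : ℂ) else 0 := by
  split_ifs with h
  · subst h; simp
  · have hc : (Complex.I * k / L : ℂ) ≠ 0 := by
      have : (k:ℂ) ≠ 0 := by exact_mod_cast h
      have : (L:ℂ) ≠ 0 := by exact_mod_cast hL.ne'
      simp [*]
    have := integral_exp_mul_complex (a := 0) (b := 2*π*L) hc
    calc _ = ∫ x in (0:ℝ)..(2*π*L), Complex.exp (Complex.I * k / L * x) := by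
            congr 1; ext x; congr 1; ring
      _ = _ := by
        rw [this]
        have hL' : (L:ℂ) ≠ 0 := by exact_mod_cast hL.ne'
        have e : (Complex.I * k / L * ((2*π*L : ℝ):ℂ)) = k * (2 * π * Complex.I) := by
          push_cast; field_simp
        rw [e, Complex.exp_int_mul_two_pi_mul_I]; simp

theorem pars {ι : Type} [DecidableEq ι] (S : Finset ι) (A : ι → ℂ) (k : ι → ℤ × ℤ) (L M : ℝ) (hL : 0 < L) (hM : 0 < M) :
    ((∫ x₂ in (0:ℝ)..(2 * π * M), ∫ x₁ in (0:ℝ)..(2 * π * L),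
      ‖∑ P ∈ S, A P * Complex.exp (Complex.I * ((k P).1 * x₁ / L + (k P).2 * x₂ / M))‖ ^ 2 : ℝ) : ℂ)
    = ∑ P ∈ S, ∑ P' ∈ S, (if k P = k P' then (2*π*L : ℂ) * (2*π*M) else 0) * (A P * (starRingEnd ℂ) (A P')) := by
  have key : ∀ x₁ x₂ : ℝ, ((‖∑ P ∈ S, A P * Complex.exp (Complex.I * ((k P).1 * x₁ / L + (k P).2 * x₂ / M))‖ ^ 2 : ℝ) : ℂ)
    = ∑ P ∈ S, ∑ P' ∈ S, (A P * (starRingEnd ℂ) (A P')) * Complex.exp (Complex.I * (((k P).2 - (k P').2 : ℤ) * x₂ / M)) * Complex.exp (Complex.I * (((k P).1 - (k P').1 : ℤ) * x₁ / L)) := by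
    intro x₁ x₂
    push_cast
    rw [← Complex.mul_conj', map_sum, Finset.sum_mul_sum]
    refine Finset.sum_congr rfl fun P _ => Finset.sum_congr rfl fun P' _ => ?_
    rw [map_mul, ← Complex.exp_conj, mul_mul_mul_comm, ← Complex.exp_add, mul_assoc (A P * _), ← Complex.exp_add]
    congr 2
    simp
    ring
  rw [← intervalIntegral.integral_ofReal]
  simp_rw [← intervalIntegral.integral_ofReal, key]
  have h1 : ∀ x₂ : ℝ, (∫ x₁ in (0:ℝ)..(2 * π * L), ∑ P ∈ S, ∑ P' ∈ S, (A P * (starRingEnd ℂ) (A P')) * Complex.exp (Complex.I * (((k P).2 - (k P').2 : ℤ) * x₂ / M)) * Complex.exp (Complex.I * (((k P).1 - (k P').1 : ℤ) * x₁ / L)))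
     = ∑ P ∈ S, ∑ P' ∈ S, ((A P * (starRingEnd ℂ) (A P')) * (if (k P).1 - (k P').1 = 0 then (2*π*L : ℂ) else 0)) * Complex.exp (Complex.I * (((k P).2 - (k P').2 : ℤ) * x₂ / M)) := by
    intro x₂
    rw [intervalIntegral.integral_finsetSum]
    · refine Finset.sum_congr rfl fun P _ => ?_
      rw [intervalIntegral.integral_finsetSum]
      · refine Finset.sum_congr rfl fun P' _ => ?_
        rw [intervalIntegral.integral_const_mul, exp_int L hL]; ring
      · intro P' _
        exact Continuous.intervalIntegrable (by fun_prop) _ _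
    · intro P' _
      exact Continuous.intervalIntegrable (by fun_prop) _ _
  simp_rw [h1]
  rw [intervalIntegral.integral_finsetSum]
  · refine Finset.sum_congr rfl fun P _ => ?_
    rw [intervalIntegral.integral_finsetSum]
    · refine Finset.sum_congr rfl fun P' _ => ?_
      rw [intervalIntegral.integral_const_mul, exp_int M hM]
      by_cases h : k P = k P'
      · simp [h]; ring
      · have : ¬ ((k P).1 - (k P').1 = 0 ∧ (k P).2 - (k P').2 = 0) := by
          rintro ⟨a, b⟩; exact h (Prod.ext (by omega) (by omega))
        rw [if_neg h]
        by_cases h2 : (k P).1 - (k P').1 = 0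
        · rw [if_neg (fun h' => this ⟨h2, h'⟩)]; simp
        · rw [if_neg h2]; simp
    · intro P' _
      exact Continuous.intervalIntegrable (by fun_prop) _ _
  · intro P' _
    exact Continuous.intervalIntegrable (by fun_prop) _ _

theorem rad (τ : ℝ) : ∫⁻ r in Set.Ioi (0:ℝ), ENNReal.ofReal (r * (1 / (1 + (2 * r^2 - τ)^2))) ≤ ENNReal.ofReal (π/4) := by
  have hd : ∀ x ∈ Set.Ici (0:ℝ), HasDerivAt (fun r => arctan (2 * r^2 - τ) / 4) (x * (1 / (1 + (2 * x^2 - τ)^2))) x := by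
    intro x _
    have h1 : HasDerivAt (fun r : ℝ => 2 * r^2 - τ) (2 * (2 * x)) x := by
      simpa using ((hasDerivAt_pow 2 x).const_mul 2).sub_const τ
    have := h1.arctan.div_const 4
    have e : x * (1 / (1 + (2 * x^2 - τ)^2)) = 1 / (1 + (2 * x ^ 2 - τ) ^ 2) * (2 * (2 * x)) / 4 := by ring
    rw [e]; exact this
  have hn : ∀ x ∈ Set.Ioi (0:ℝ), 0 ≤ (x * (1 / (1 + (2 * x^2 - τ)^2))) := by
    intro x hx
    have : 0 < x := hx
    positivity
  have ht : Filter.Tendsto (fun r : ℝ => arctan (2 * r^2 - τ) / 4) Filter.atTop (nhds ((π/2)/4)) := by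
    apply Filter.Tendsto.div_const
    apply (tendsto_arctan_atTop.mono_right nhdsWithin_le_nhds).comp
    apply Filter.tendsto_atTop_add_const_right _ (-τ)
    exact (Filter.tendsto_pow_atTop (by norm_num)).const_mul_atTop (by norm_num)
  have hi := integrableOn_Ioi_deriv_of_nonneg' hd hn ht
  have he := integral_Ioi_of_hasDerivAt_of_nonneg' hd hn ht
  rw [← ofReal_integral_eq_lintegral_ofReal hi ((ae_restrict_iff' measurableSet_Ioi).2 (Filter.Eventually.of_forall hn)), he]
  apply ENNReal.ofReal_le_ofReal
  have := neg_pi_div_two_lt_arctan (2 * 0^2 - τ)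
  linarith

theorem plane (τ : ℝ) : ∫⁻ x : ℝ × ℝ, ENNReal.ofReal (1 / (1 + (2 * (x.1^2+x.2^2) - τ)^2)) ≤ ENNReal.ofReal (π^2/2) := by
  rw [← lintegral_comp_polarCoord_symm, polarCoord_target]
  have h0 : ∀ p : ℝ × ℝ, p ∈ Set.Ioi (0:ℝ) ×ˢ Set.Ioo (-π) π → ENNReal.ofReal p.1 • ENNReal.ofReal (1 / (1 + (2 * ((polarCoord.symm p).1^2+(polarCoord.symm p).2^2) - τ)^2)) = ENNReal.ofReal (p.1 * (1 / (1 + (2 * p.1^2 - τ)^2))) := by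
    rintro ⟨r, θ⟩ ⟨hr, _⟩
    have hr : 0 < r := hr
    have e : (r * cos θ)^2 + (r * sin θ)^2 = r^2 := by
      have := sin_sq_add_cos_sq θ
      nlinarith
    simp only [polarCoord_symm_apply, e, smul_eq_mul]
    rw [ENNReal.ofReal_mul hr.le]
  rw [setLIntegral_congr_fun (measurableSet_Ioi.prod measurableSet_Ioo) h0, Measure.volume_eq_prod, ← Measure.prod_restrict, lintegral_prod _ (by fun_prop)]
  simp only [lintegral_const, Measure.restrict_apply MeasurableSet.univ, Set.univ_inter, Real.volume_Ioo]
  rw [lintegral_mul_const _ (by fun_prop)]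
  calc _ ≤ ENNReal.ofReal (π/4) * ENNReal.ofReal (π - -π) := by gcongr; exact rad τ
    _ = _ := by rw [← ENNReal.ofReal_mul (by positivity)]; congr 1; ring

theorem shiftb (s h : ℝ) (h1 : -22 ≤ h) (h2 : h ≤ 22) : 1 * (1 + (s+h)^2) ≤ 970 * (1 + s^2) := by
  have : h^2 ≤ 484 := by nlinarith
  nlinarith [sq_nonneg (s-h), sq_nonneg s]

theorem cells {ι α : Type} [MeasureSpace α] (S : Finset ι) (cell : ι → Set α) (v : ENNReal) (G : α → ENNReal)
    (b : ι → ENNReal) (K : ENNReal) (hdisj : Set.PairwiseDisjoint (S : Set ι) cell)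
    (hmeas : ∀ n, MeasurableSet (cell n)) (hvol : ∀ n, volume (cell n) = v)
    (hpt : ∀ n ∈ S, ∀ x ∈ cell n, b n ≤ K * G x) (hG : Measurable G) :
    (∑ n ∈ S, b n) * v ≤ K * ∫⁻ x, G x := by
  rw [Finset.sum_mul]
  calc _ ≤ ∑ n ∈ S, ∫⁻ x in cell n, K * G x := by
        refine Finset.sum_le_sum fun n hn => ?_
        rw [← hvol n, ← setLIntegral_const]
        exact setLIntegral_mono' (hmeas n) (hpt n hn)
    _ = ∫⁻ x in ⋃ n ∈ S, cell n, K * G x := by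
        rw [lintegral_biUnion_finset hdisj (fun n _ => hmeas n)]
    _ ≤ ∫⁻ x, K * G x := setLIntegral_le_lintegral _ _
    _ = _ := lintegral_const_mul _ hG

theorem count (γ lam : ℝ) (hγ : γ ∈ Set.Ioc (1/2 : ℝ) 1) (hl : 1 ≤ lam) (S : Finset (ℤ × ℤ)) (c d τ : ℝ)
   (hS : ∀ n ∈ S, |(n.1:ℝ)/lam - c| ≤ lam ∧ |(n.2:ℝ)/(γ*lam) - d| ≤ lam) :
   ∑ n ∈ S, 1 / (1 + (2 * (((n.1:ℝ)/lam - c)^2 + ((n.2:ℝ)/(γ*lam) - d)^2) - τ)^2) ≤ 485 * π^2 * lam^2 := by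
  obtain ⟨hγ1, hγ2⟩ := hγ
  have hl0 : 0 < lam := by linarith
  have hγ0 : 0 < γ := by linarith
  have hg0 : 0 < γ * lam := by positivity
  let cell : ℤ × ℤ → Set (ℝ × ℝ) := fun n =>
    Set.Ico ((n.1:ℝ)/lam - c) (((n.1:ℝ)+1)/lam - c) ×ˢ Set.Ico ((n.2:ℝ)/(γ*lam) - d) (((n.2:ℝ)+1)/(γ*lam) - d)
  have aux : ∀ (L : ℝ), 0 < L → ∀ (c x : ℝ) (n : ℤ), x ∈ Set.Ico ((n:ℝ)/L - c) (((n:ℝ)+1)/L - c) → ⌊(x + c) * L⌋ = n := by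
    rintro L hL c x n ⟨h1, h2⟩
    rw [Int.floor_eq_iff]
    rw [sub_le_iff_le_add, div_le_iff₀ hL] at h1
    rw [lt_sub_iff_add_lt, lt_div_iff₀ hL] at h2
    exact ⟨h1, h2⟩
  have hdisj : Set.PairwiseDisjoint (S : Set (ℤ × ℤ)) cell := by
    intro n _ m _ hnm
    refine Set.disjoint_left.2 fun x hx hy => hnm ?_
    refine Prod.ext ?_ ?_
    · rw [← aux lam hl0 c x.1 n.1 hx.1, ← aux lam hl0 c x.1 m.1 hy.1]
    · rw [← aux _ hg0 d x.2 n.2 hx.2, ← aux _ hg0 d x.2 m.2 hy.2]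
  have hmeas : ∀ n, MeasurableSet (cell n) := fun n => measurableSet_Ico.prod measurableSet_Ico
  have hvol : ∀ n, volume (cell n) = ENNReal.ofReal (1 / (γ * lam^2)) := by
    intro n
    simp only [cell]
    rw [Measure.volume_eq_prod, Measure.prod_prod, Real.volume_Ico, Real.volume_Ico, ← ENNReal.ofReal_mul]
    · congr 1; field_simp; ring
    · have : 0 < 1/lam := by positivity
      rw [add_div]; linarith
  have hpt : ∀ n ∈ S, ∀ x ∈ cell n, ENNReal.ofReal (1 / (1 + (2 * (((n.1:ℝ)/lam - c)^2 + ((n.2:ℝ)/(γ*lam) - d)^2) - τ)^2)) ≤ ENNReal.ofReal 970 * ENNReal.ofReal (1 / (1 + (2 * (x.1^2+x.2^2) - τ)^2)) := by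
    rintro n hn ⟨x, y⟩ ⟨⟨hx1, hx2⟩, ⟨hy1, hy2⟩⟩
    rw [← ENNReal.ofReal_mul (by norm_num)]
    apply ENNReal.ofReal_le_ofReal
    obtain ⟨hp, hq⟩ := hS n hn
    simp only at hx1 hx2 hy1 hy2
    rw [add_div, add_sub_right_comm] at hx2 hy2
    set p := (n.1:ℝ)/lam - c
    set q := (n.2:ℝ)/(γ*lam) - d
    have h2 : 1/(γ*lam) ≤ 2/lam := by
      rw [div_le_div_iff₀ hg0 hl0]; nlinarith
    have e1 : |x - p| ≤ 1/lam := by rw [abs_le]; constructor <;> linarith [show 0 < 1/lam by positivity]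
    have e2 : |y - q| ≤ 2/lam := by rw [abs_le]; constructor <;> linarith [show 0 < 2/lam by positivity]
    have hl1 : 1/lam ≤ 1 := by rw [div_le_one hl0]; exact hl
    have hl2 : 2/lam ≤ 2 := by rw [div_le_iff₀ hl0]; linarith
    have f1 : |p * (x-p)| ≤ 1 := by
      rw [abs_mul]
      calc _ ≤ lam * (1/lam) := by gcongr
        _ = 1 := by field_simp
    have f2 : |q * (y-q)| ≤ 2 := by
      rw [abs_mul]
      calc _ ≤ lam * (2/lam) := by gcongr
        _ = 2 := by field_simp
    have g1 : (x-p)^2 ≤ 1 := by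
      rw [sq_le_one_iff_abs_le_one]; linarith
    have g2 : (y-q)^2 ≤ 4 := by
      have := abs_le.1 (e2.trans hl2); nlinarith
    have hh : |2*(x^2+y^2) - 2*(p^2+q^2)| ≤ 22 := by
      have := abs_le.1 f1
      have := abs_le.1 f2
      rw [abs_le]
      constructor <;> nlinarith [sq_nonneg (x-p), sq_nonneg (y-q)]
    rw [mul_one_div, div_le_div_iff₀ (by positivity) (by positivity)]
    have := abs_le.1 hh
    set h := 2*(x^2+y^2) - 2*(p^2+q^2) with hh'
    have e3 : 2*(x^2+y^2) - τ = (2*(p^2+q^2) - τ) + h := by rw [hh']; ring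
    rw [e3]
    exact shiftb _ _ this.1 this.2
  have hmain : ENNReal.ofReal (∑ n ∈ S, 1 / (1 + (2 * (((n.1:ℝ)/lam - c)^2 + ((n.2:ℝ)/(γ*lam) - d)^2) - τ)^2)) * ENNReal.ofReal (1 / (γ * lam^2)) ≤ ENNReal.ofReal 970 * ENNReal.ofReal (π^2/2) := by
    rw [ENNReal.ofReal_sum_of_nonneg (fun _ _ => by positivity)]
    refine (cells S cell _ (fun x => ENNReal.ofReal (1 / (1 + (2 * (x.1^2+x.2^2) - τ)^2))) _ _ hdisj hmeas hvol hpt (by fun_prop)).trans ?_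
    exact mul_le_mul_right (plane τ) _
  rw [← ENNReal.ofReal_mul (Finset.sum_nonneg fun _ _ => by positivity), ← ENNReal.ofReal_mul (by norm_num),
    ENNReal.ofReal_le_ofReal_iff (by positivity), mul_one_div, div_le_iff₀ (by positivity)] at hmain
  calc _ ≤ _ := hmain
    _ = 485 * π^2 * (γ * lam^2) := by ring
    _ ≤ 485 * π^2 * (1 * lam^2) := by gcongr
    _ = _ := by ring

theorem timeint {ι : Type} (S : Finset ι) (c : ι → ℂ) (θ : ι → ℝ) (J : ℝ → ℝ) (hJ0 : ∀ t, 0 ≤ J t)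
    (hJ : ∀ t : ℝ, (J t : ℂ) = ∑ P ∈ S, c P * Complex.exp (Complex.I * θ P * t)) :
    ∫ t in (0:ℝ)..1, J t ≤ ∑ P ∈ S, ‖c P‖ * (24 / (1 + θ P ^ 2)) := by
  have hterm : ∀ P, Integrable (fun t : ℝ => Complex.exp (Complex.I * θ P * t) * Complex.exp (-1 * (t:ℂ)^2)) := by
    intro P
    have := integrable_cexp_quadratic (b := 1) (by simp) (Complex.I * θ P) 0
    refine this.congr (Filter.Eventually.of_forall fun t => ?_)
    simp only
    rw [← Complex.exp_add]; congr 1; ring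
  have hsum : ∀ t : ℝ, ((J t * exp (-t^2) : ℝ) : ℂ) = ∑ P ∈ S, c P * (Complex.exp (Complex.I * θ P * t) * Complex.exp (-1 * (t:ℂ)^2)) := by
    intro t
    push_cast
    rw [hJ, Finset.sum_mul]
    refine Finset.sum_congr rfl fun P _ => ?_
    rw [neg_one_mul]; ring
  have hintC : Integrable (fun t : ℝ => ((J t * exp (-t^2) : ℝ) : ℂ)) := by
    simp_rw [hsum]
    exact integrable_finsetSum _ fun P _ => (hterm P).const_mul _
  have hIntR : Integrable (fun t : ℝ => J t * exp (-t^2)) := by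
    exact hintC.re
  have hJc : Continuous J := by
    have : J = fun t : ℝ => (∑ P ∈ S, c P * Complex.exp (Complex.I * θ P * t)).re := by
      ext t; rw [← hJ]; simp
    rw [this]; fun_prop
  have h1 : ∫ t in (0:ℝ)..1, J t ≤ ∫ t in (0:ℝ)..1, exp 1 * (J t * exp (-t^2)) := by
    apply intervalIntegral.integral_mono_on (by norm_num) (hJc.intervalIntegrable _ _)
      (Continuous.intervalIntegrable (by fun_prop) _ _)
    intro t ht
    have : 1 ≤ exp 1 * exp (-t^2) := by
      rw [← exp_add]; apply one_le_exp
      nlinarith [ht.1, ht.2]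
    nlinarith [hJ0 t]
  have h2 : ∫ t in (0:ℝ)..1, (J t * exp (-t^2)) ≤ ∫ t, J t * exp (-t^2) := by
    rw [intervalIntegral.integral_of_le (by norm_num)]
    exact setIntegral_le_integral hIntR (Filter.Eventually.of_forall fun t => mul_nonneg (hJ0 t) (exp_pos _).le)
  have h3 : ((∫ t, J t * exp (-t^2) : ℝ) : ℂ) = ∑ P ∈ S, c P * ((√π * exp (-θ P^2/4) : ℝ) : ℂ) := by
    rw [← integral_complex_ofReal]
    simp_rw [hsum]
    rw [integral_finsetSum _ fun P _ => (hterm P).const_mul _]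
    refine Finset.sum_congr rfl fun P _ => ?_
    rw [integral_const_mul, fourierIntegral_gaussian (by simp)]
    congr 1
    rw [Real.sqrt_eq_rpow]
    push_cast
    rw [Complex.ofReal_cpow pi_pos.le]
    simp
  have h4 : ∫ t, J t * exp (-t^2) ≤ ∑ P ∈ S, ‖c P‖ * (√π * exp (-θ P^2/4)) := by
    have h0 : 0 ≤ ∫ t, J t * exp (-t^2) := integral_nonneg fun t => mul_nonneg (hJ0 t) (exp_pos _).le
    calc _ = ‖((∫ t, J t * exp (-t^2) : ℝ) : ℂ)‖ := by
          rw [Complex.norm_real, Real.norm_of_nonneg h0]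
      _ ≤ _ := by
          rw [h3]
          refine (norm_sum_le _ _).trans (Finset.sum_le_sum fun P _ => ?_)
          rw [norm_mul, Complex.norm_real, Real.norm_of_nonneg (by positivity)]
  rw [intervalIntegral.integral_const_mul] at h1
  refine h1.trans ((mul_le_mul_of_nonneg_left (h2.trans h4) (exp_pos _).le).trans ?_)
  rw [Finset.mul_sum]
  refine Finset.sum_le_sum fun P _ => ?_
  have e1 : exp 1 ≤ 3 := by have := exp_one_lt_d9; linarith
  have e2 : √π ≤ 2 := by rw [Real.sqrt_le_left (by norm_num)]; linarith [pi_le_four]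
  have e3 : exp (-θ P^2/4) ≤ 4 / (1 + θ P^2) := by
    have := add_one_le_exp (θ P^2/4)
    rw [neg_div, exp_neg, inv_le_comm₀ (exp_pos _) (by positivity), inv_div]
    linarith
  calc _ = ‖c P‖ * (exp 1 * (√π * exp (-θ P^2/4))) := by ring
    _ ≤ ‖c P‖ * (3 * (2 * (4 / (1 + θ P^2)))) := by gcongr
    _ = _ := by ring

theorem schur_s2 {ι : Type} (T : Finset ι) (W : ι → ι → ℝ) (f : ι → ℝ) (K : ℝ) (hs : ∀ P P', W P P' = W P' P)
    (h0 : ∀ P P', 0 ≤ W P P') (hK : ∀ P ∈ T, ∑ P' ∈ T, W P P' ≤ K) :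
    ∑ P ∈ T, ∑ P' ∈ T, W P P' * (f P * f P') ≤ K * ∑ P ∈ T, f P ^ 2 := by
  have h1 : ∑ P ∈ T, ∑ P' ∈ T, W P P' * (f P * f P') ≤
      ∑ P ∈ T, ∑ P' ∈ T, (W P P' * f P ^ 2 / 2 + W P P' * f P' ^ 2 / 2) := by
    refine Finset.sum_le_sum fun P _ => Finset.sum_le_sum fun P' _ => ?_
    nlinarith [mul_nonneg (h0 P P') (sq_nonneg (f P - f P'))]
  have h2 : ∑ P ∈ T, ∑ P' ∈ T, W P P' * f P' ^ 2 / 2 = ∑ P ∈ T, ∑ P' ∈ T, W P P' * f P ^ 2 / 2 := by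
    rw [Finset.sum_comm]
    refine Finset.sum_congr rfl fun P _ => Finset.sum_congr rfl fun P' _ => ?_
    rw [hs]
  simp_rw [Finset.sum_add_distrib] at h1
  rw [h2] at h1
  refine h1.trans ?_
  rw [← Finset.sum_add_distrib, Finset.mul_sum]
  refine Finset.sum_le_sum fun P hP => ?_
  rw [← Finset.sum_add_distrib]
  simp_rw [add_halves]
  rw [← Finset.sum_mul]
  exact mul_le_mul_of_nonneg_right (hK P hP) (sq_nonneg _)

theorem abs_half (N L x y c : ℝ) (hx : |x| ≤ N) (hy : |y| ≤ N) (hN : N ≤ L) (hc : x + y = 2 * c) :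
    |x - c| ≤ L := by
  rw [abs_le] at *
  constructor <;> linarith [hx.1, hx.2, hy.1, hy.2]

theorem count_pairs (γ lam N : ℝ) (hγ : γ ∈ Set.Ioc (1/2 : ℝ) 1) (hl : 1 ≤ lam) (hN : N ≤ lam)
    (S : Finset (ℤ × ℤ)) (hS : ∀ n ∈ S, |(n.1:ℝ)/lam| ≤ N ∧ |(n.2:ℝ)/(γ*lam)| ≤ N) (Q : ℤ × ℤ → ℝ)
    (hQ : ∀ n, Q n = ((n.1 : ℝ) / lam) ^ 2 + ((n.2 : ℝ) / (γ * lam)) ^ 2) (k : ℤ × ℤ) (τ : ℝ) :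
    ∑ P ∈ S ×ˢ S with P.1 + P.2 = k, 1 / (1 + (Q P.1 + Q P.2 - τ)^2) ≤ 485 * π^2 * lam^2 := by
  obtain ⟨c, hc⟩ : ∃ c : ℝ, c = (k.1:ℝ)/lam/2 := ⟨_, rfl⟩
  obtain ⟨d, hd⟩ : ∃ d : ℝ, d = (k.2:ℝ)/(γ*lam)/2 := ⟨_, rfl⟩
  set U := (S ×ˢ S).filter (fun P => P.1 + P.2 = k) with hU
  have hinj : Set.InjOn (Prod.fst : (ℤ × ℤ) × (ℤ × ℤ) → ℤ × ℤ) U := by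
    rintro ⟨n, m⟩ h ⟨n', m'⟩ h' (e : n = n')
    simp only [hU, Finset.coe_filter, Set.mem_ofPred_eq] at h h'
    have : m = m' := by
      have h1 := h.2.trans h'.2.symm
      rw [e] at h1
      exact add_left_cancel h1
    rw [e, this]
  have hmem : ∀ P ∈ U, P.1 ∈ S ∧ P.2 ∈ S ∧ ((P.1.1:ℝ)/lam + (P.2.1:ℝ)/lam = 2 * c)
      ∧ ((P.1.2:ℝ)/(γ*lam) + (P.2.2:ℝ)/(γ*lam) = 2 * d) := by
    intro P hP
    simp only [hU, Finset.mem_filter, Finset.mem_product] at hP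
    refine ⟨hP.1.1, hP.1.2, ?_, ?_⟩
    · rw [hc, ← hP.2, Prod.fst_add]; push_cast; ring
    · rw [hd, ← hP.2, Prod.snd_add]; push_cast; ring
  have := count γ lam hγ hl (U.image Prod.fst) c d (τ - 2 * (c^2+d^2)) (by
    intro n hn
    obtain ⟨P, hP, rfl⟩ := Finset.mem_image.1 hn
    obtain ⟨h1, h2, h3, h4⟩ := hmem P hP
    exact ⟨abs_half N lam _ _ c (hS _ h1).1 (hS _ h2).1 hN h3, abs_half N lam _ _ d (hS _ h1).2 (hS _ h2).2 hN h4⟩)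
  rw [Finset.sum_image hinj] at this
  refine le_trans (le_of_eq ?_) this
  refine Finset.sum_congr rfl fun P hP => ?_
  obtain ⟨h1, h2, h3, h4⟩ := hmem P hP
  congr 3
  rw [hQ, hQ]
  have e1 := eq_sub_of_add_eq' h3
  have e2 := eq_sub_of_add_eq' h4
  rw [e1, e2]
  ring

/-- Lossless `L⁴` Strichartz estimate on the unit time interval for the rescaled
(possibly irrational) torus `𝕋²_λ = (ℝ/2πλℤ) × (ℝ/2πγλℤ)`, for free Schrödinger waves
with frequencies `κ(n) = (n₁/λ, n₂/(γλ))` of size at most `N ≤ λ`, uniformly in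
`γ ∈ (1/2, 1]`. -/
theorem L4_strichartz_2d_lossless :
    ∃ C : ℝ, 0 < C ∧
      ∀ (γ lam N : ℝ), γ ∈ Set.Ioc (1/2 : ℝ) 1 → 1 ≤ lam → 1 ≤ N → N ≤ lam →
      ∀ (a : ℤ × ℤ →₀ ℂ),
        (∀ n : ℤ × ℤ,
          ¬ Real.sqrt (((n.1 : ℝ) / lam) ^ 2 + ((n.2 : ℝ) / (γ * lam)) ^ 2) ≤ N → a n = 0) →
      ∀ (u : ℝ → ℝ → ℝ → ℂ),
        (∀ t x₁ x₂ : ℝ, u t x₁ x₂ = ∑ n ∈ a.support, a n *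
          Complex.exp (Complex.I *
            ((n.1 : ℂ) * (x₁ : ℂ) / (lam : ℂ)
              + (n.2 : ℂ) * (x₂ : ℂ) / ((γ : ℂ) * (lam : ℂ))
              - ((((n.1 : ℝ) / lam) ^ 2 + ((n.2 : ℝ) / (γ * lam)) ^ 2 : ℝ) : ℂ)
                  * (t : ℂ)))) →
        (∫ t in (0:ℝ)..1, ∫ x₂ in (0:ℝ)..(2 * π * γ * lam), ∫ x₁ in (0:ℝ)..(2 * π * lam),
            ‖u t x₁ x₂‖ ^ 4) ^ ((1:ℝ)/4) ≤
          C * (∫ x₂ in (0:ℝ)..(2 * π * γ * lam), ∫ x₁ in (0:ℝ)..(2 * π * lam),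
            ‖u 0 x₁ x₂‖ ^ 2) ^ ((1:ℝ)/2) := by
  refine ⟨9, by norm_num, ?_⟩
  intro γ lam N hγ hl hN1 hN a ha u hu
  have hl0 : 0 < lam := by linarith
  have hγ0 : 0 < γ := by linarith [hγ.1]
  have hg0 : 0 < γ * lam := by positivity
  obtain ⟨Q, hQ⟩ : ∃ Q : ℤ × ℤ → ℝ, ∀ n, Q n = ((n.1 : ℝ) / lam) ^ 2 + ((n.2 : ℝ) / (γ * lam)) ^ 2 := ⟨_, fun _ => rfl⟩
  have hS : ∀ n ∈ a.support, |(n.1:ℝ)/lam| ≤ N ∧ |(n.2:ℝ)/(γ*lam)| ≤ N := by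
    intro n hn
    have h1 : Real.sqrt (((n.1 : ℝ) / lam) ^ 2 + ((n.2 : ℝ) / (γ * lam)) ^ 2) ≤ N := by
      by_contra h
      exact (Finsupp.mem_support_iff.1 hn) (ha n h)
    exact ⟨(Real.abs_le_sqrt (by nlinarith [sq_nonneg ((n.2 : ℝ) / (γ * lam))])).trans h1,
      (Real.abs_le_sqrt (by nlinarith [sq_nonneg ((n.1 : ℝ) / lam)])).trans h1⟩
  have hu' : ∀ t x₁ x₂ : ℝ, u t x₁ x₂ = ∑ n ∈ a.support, (a n * Complex.exp (-(Complex.I * Q n * t))) *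
      Complex.exp (Complex.I * ((n.1 : ℂ) * x₁ / lam + (n.2 : ℂ) * x₂ / ((γ * lam : ℝ) : ℂ))) := by
    intro t x₁ x₂
    rw [hu]
    refine Finset.sum_congr rfl fun n _ => ?_
    rw [mul_assoc (a n), ← Complex.exp_add, hQ]
    congr 2
    push_cast
    ring
  obtain ⟨V, hV⟩ : ∃ V : ℝ, V = (2*π*lam) * (2*π*(γ*lam)) := ⟨_, rfl⟩
  have hV0 : 0 < V := by rw [hV]; positivity
  have hVC : (2*π*lam : ℂ) * (2*π*((γ*lam : ℝ):ℂ)) = (V:ℂ) := by rw [hV]; push_cast; ring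
  set E : ℝ := ∑ n ∈ a.support, ‖a n‖^2 with hE
  have hE0 : 0 ≤ E := Finset.sum_nonneg fun _ _ => by positivity
  have hassoc : 2 * π * γ * lam = 2 * π * (γ * lam) := by ring
  rw [hassoc]
  have hmass : (∫ x₂ in (0:ℝ)..(2 * π * (γ * lam)), ∫ x₁ in (0:ℝ)..(2 * π * lam), ‖u 0 x₁ x₂‖ ^ 2) = V * E := by
    have := pars a.support (fun n => a n * Complex.exp (-(Complex.I * Q n * (0:ℝ)))) id lam (γ*lam) hl0 hg0
    simp only [id] at this
    simp_rw [← hu'] at this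
    rw [hVC] at this
    apply Complex.ofReal_injective
    rw [this, hE, Finset.mul_sum]
    push_cast
    refine Finset.sum_congr rfl fun n hn => ?_
    simp only [ite_mul, zero_mul, Finset.sum_ite_eq, hn, if_true]
    simp [Complex.mul_conj']
  set T := a.support ×ˢ a.support with hT
  have hu2 : ∀ t x₁ x₂ : ℝ, u t x₁ x₂ ^ 2 = ∑ P ∈ T, (a P.1 * a P.2 * Complex.exp (-(Complex.I * ((Q P.1 + Q P.2 : ℝ) : ℂ) * t))) *
      Complex.exp (Complex.I * (((P.1 + P.2).1 : ℂ) * x₁ / lam + ((P.1 + P.2).2 : ℂ) * x₂ / ((γ * lam : ℝ) : ℂ))) := by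
    intro t x₁ x₂
    rw [sq, hu', Finset.sum_mul_sum, hT, Finset.sum_product]
    refine Finset.sum_congr rfl fun n _ => Finset.sum_congr rfl fun m _ => ?_
    rw [mul_mul_mul_comm, ← Complex.exp_add, mul_mul_mul_comm, ← Complex.exp_add]
    congr 2
    · congr 1; push_cast; ring
    · simp only [Prod.fst_add, Prod.snd_add]; push_cast; ring
  have hJ : ∀ t : ℝ, ((∫ x₂ in (0:ℝ)..(2 * π * (γ * lam)), ∫ x₁ in (0:ℝ)..(2 * π * lam), ‖u t x₁ x₂‖ ^ 4 : ℝ) : ℂ)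
      = ∑ R ∈ T ×ˢ T, ((if R.1.1 + R.1.2 = R.2.1 + R.2.2 then (V:ℂ) else 0) *
          (a R.1.1 * a R.1.2 * (starRingEnd ℂ) (a R.2.1 * a R.2.2))) *
          Complex.exp (Complex.I * (((Q R.2.1 + Q R.2.2) - (Q R.1.1 + Q R.1.2) : ℝ) : ℂ) * t) := by
    intro t
    have := pars T (fun P => a P.1 * a P.2 * Complex.exp (-(Complex.I * ((Q P.1 + Q P.2 : ℝ) : ℂ) * t))) (fun P => P.1 + P.2) lam (γ*lam) hl0 hg0
    simp_rw [← hu2] at this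
    rw [hVC] at this
    have e4 : ∀ z : ℂ, ‖z‖^4 = ‖z^2‖^2 := fun z => by rw [norm_pow]; ring
    simp_rw [e4]
    rw [this, Finset.sum_product (s := T)]
    refine Finset.sum_congr rfl fun P _ => Finset.sum_congr rfl fun P' _ => ?_
    rw [map_mul, ← Complex.exp_conj, mul_mul_mul_comm, ← Complex.exp_add, mul_assoc (ite _ _ _)]
    congr 3
    simp
    ring
  have h2π : (0:ℝ) ≤ 2 * π * lam := by positivity
  have h2π' : (0:ℝ) ≤ 2 * π * (γ * lam) := by positivity
  have hmain := timeint (T ×ˢ T) _ _ _ (fun t => intervalIntegral.integral_nonneg h2π' fun x₂ _ =>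
    intervalIntegral.integral_nonneg h2π fun x₁ _ => by positivity) hJ
  have hsch := schur_s2 T (fun P P' => (if P.1 + P.2 = P'.1 + P'.2 then V else 0) * (24 / (1 + ((Q P'.1 + Q P'.2) - (Q P.1 + Q P.2))^2)))
    (fun P => ‖a P.1‖ * ‖a P.2‖) (V * (24 * (485 * π^2 * lam^2)))
    (by
      intro P P'
      simp only [eq_comm (a := P.1 + P.2)]
      rw [← neg_sub (Q P.1 + Q P.2), neg_sq])
    (by intro P P'; split_ifs <;> positivity)
    (by
      intro P hP
      have hc := count_pairs γ lam N hγ hl hN a.support hS Q hQ (P.1 + P.2) (Q P.1 + Q P.2)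
      calc _ = V * (24 * ∑ P' ∈ T with P'.1 + P'.2 = P.1 + P.2, 1 / (1 + (Q P'.1 + Q P'.2 - (Q P.1 + Q P.2))^2)) := by
            rw [Finset.sum_filter, Finset.mul_sum, Finset.mul_sum]
            refine Finset.sum_congr rfl fun P' _ => ?_
            simp only [eq_comm (a := P.1 + P.2)]
            split_ifs
            · ring
            · ring
        _ ≤ _ := by gcongr)
  have hAA : ∑ P ∈ T, (‖a P.1‖ * ‖a P.2‖)^2 = E^2 := by
    rw [hE, sq (∑ n ∈ a.support, _), Finset.sum_mul_sum, hT, Finset.sum_product]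
    simp_rw [mul_pow]
  have hfin : (∫ t in (0:ℝ)..1, ∫ x₂ in (0:ℝ)..(2 * π * (γ * lam)), ∫ x₁ in (0:ℝ)..(2 * π * lam), ‖u t x₁ x₂‖ ^ 4)
      ≤ (9 * √(V * E))^4 := by
    calc _ ≤ _ := hmain
      _ = ∑ P ∈ T, ∑ P' ∈ T, (if P.1 + P.2 = P'.1 + P'.2 then V else 0) * (24 / (1 + ((Q P'.1 + Q P'.2) - (Q P.1 + Q P.2))^2)) * ((‖a P.1‖ * ‖a P.2‖) * (‖a P'.1‖ * ‖a P'.2‖)) := by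
          rw [Finset.sum_product (s := T)]
          refine Finset.sum_congr rfl fun P _ => Finset.sum_congr rfl fun P' _ => ?_
          split_ifs
          · simp only [norm_mul, RCLike.norm_conj, Complex.norm_real, Real.norm_of_nonneg hV0.le]
            ring
          · simp
      _ ≤ V * (24 * (485 * π^2 * lam^2)) * E^2 := by rw [← hAA]; exact hsch
      _ ≤ V * (5820 * V) * E^2 := by
          have : 24 * (485 * π^2 * lam^2) ≤ 5820 * V := by
            rw [hV]
            have h1 : 0 < π^2*lam^2 := by positivity
            have h2 : 1/2 ≤ γ := hγ.1.le
            nlinarith [mul_le_mul_of_nonneg_left h2 h1.le]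
          gcongr
      _ ≤ 6561 * (V * E)^2 := by nlinarith [sq_nonneg (V * E)]
      _ = _ := by
          have h1 : √(V * E) ^ 2 = V * E := Real.sq_sqrt (by positivity)
          have h2 : (9 * √(V * E)) ^ 4 = 6561 * (√(V * E) ^ 2) ^ 2 := by ring
          rw [h2, h1]
  rw [hmass, ← Real.sqrt_eq_rpow]
  have hnn : 0 ≤ (∫ t in (0:ℝ)..1, ∫ x₂ in (0:ℝ)..(2 * π * (γ * lam)), ∫ x₁ in (0:ℝ)..(2 * π * lam), ‖u t x₁ x₂‖ ^ 4) :=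
    intervalIntegral.integral_nonneg zero_le_one fun t _ => intervalIntegral.integral_nonneg h2π' fun x₂ _ =>
    intervalIntegral.integral_nonneg h2π fun x₁ _ => by positivity
  refine (Real.rpow_le_rpow hnn hfin (by norm_num)).trans (le_of_eq ?_)
  have := Real.pow_rpow_inv_natCast (x := 9 * √(V * E)) (n := 4) (by positivity) (by norm_num)
  rw [one_div]
  exact_mod_cast this
end
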